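/- For every n ≥ 0, the parabolic embedding i_n : ℂ[GL(n,q)] → ℂ[GL(n+1,q)], defined by i_n(e_g) = (1/((q−1)q^n))·Σ_{h ∈ Ext(g)} e_h, is an injective homomorphism of (non-unital) ℂ-algebras: it is linear, injective, and satisfies i_n(a·b) = i_n(a)·i_n(b) for all a, b ∈ ℂ[GL(n,q)]. (The key fact underlying Proposition 2.6, realizing A(GLB) as an inductive limit of the group algebras ℂ[GL(n,q)].) -/

import Mathlib

/-!
STATEMENT 3: the parabolic embedding `i_n : ℂ[GL(n,q)] → ℂ[GL(n+1,q)]` is an injective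
homomorphism of (non-unital) ℂ-algebras (the key fact underlying Proposition 2.6).
-/

variable (F : Type) [Field F] [Fintype F] [DecidableEq F]

/-- `GL(n,q)`, the group of invertible `n × n` matrices over the finite field `F` (`q = |F|`). -/
abbrev GLn (n : ℕ) := GL (Fin n) F

/-- The complex group algebra `ℂ[GL(n,q)]`. -/
abbrev GA (n : ℕ) := MonoidAlgebra ℂ (GLn F n)

open scoped Classical in
/-- `Ext(g)`: the set of `h ∈ GL(n+1,q)` whose top-left `n × n` corner is `g` and whose last
row vanishes except possibly at the `(n+1,n+1)` entry. -/
noncomputable def ExtSet {n : ℕ} (g : GLn F n) : Finset (GLn F (n + 1)) :=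
  Finset.univ.filter (fun h =>
    (∀ i j : Fin n, (h : Matrix (Fin (n + 1)) (Fin (n + 1)) F) i.castSucc j.castSucc
        = (g : Matrix (Fin n) (Fin n) F) i j) ∧
    (∀ j : Fin n, (h : Matrix (Fin (n + 1)) (Fin (n + 1)) F) (Fin.last n) j.castSucc = 0))

/-- The parabolic embedding `i_n : ℂ[GL(n,q)] → ℂ[GL(n+1,q)]`,
`e_g ↦ (1/((q-1)q^n)) ∑_{h ∈ Ext(g)} e_h`, as a linear map. -/
noncomputable def paraEmb (n : ℕ) : GA F n →ₗ[ℂ] GA F (n + 1) :=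
  (Finsupp.lsum ℂ (fun g => LinearMap.toSpanSingleton ℂ (GA F (n + 1))
    ((((Fintype.card F : ℂ) - 1) * (Fintype.card F : ℂ) ^ n)⁻¹ •
      ∑ h ∈ ExtSet F g, MonoidAlgebra.single h (1 : ℂ)))) ∘ₗ
    (MonoidAlgebra.coeffLinearEquiv ℂ).toLinearMap

theorem mem_ExtSet {n : ℕ} (g : GLn F n) (h : GLn F (n + 1)) : h ∈ ExtSet F g ↔
    (∀ i j : Fin n, (h : Matrix (Fin (n + 1)) (Fin (n + 1)) F) i.castSucc j.castSucc
        = (g : Matrix (Fin n) (Fin n) F) i j) ∧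
    (∀ j : Fin n, (h : Matrix (Fin (n + 1)) (Fin (n + 1)) F) (Fin.last n) j.castSucc = 0) := by
  simp [ExtSet]

/-- block matrix -/
def extM {n : ℕ} (g : Matrix (Fin n) (Fin n) F) (v : Fin n → F) (u : F) :
    Matrix (Fin (n + 1)) (Fin (n + 1)) F :=
  fun i j => Fin.lastCases (motive := fun _ => F)
    (Fin.lastCases (motive := fun _ => F) u (fun _ => 0) j)
    (fun i' => Fin.lastCases (motive := fun _ => F) (v i') (fun j' => g i' j') j) i

theorem extM_mul {n : ℕ} (g g' : Matrix (Fin n) (Fin n) F) (v v' : Fin n → F) (u u' : F) :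
    extM F g v u * extM F g' v' u' = extM F (g * g') (g.mulVec v' + u' • v) (u * u') := by
  ext i j
  rw [Matrix.mul_apply, Fin.sum_univ_castSucc]
  refine Fin.lastCases ?_ (fun i => ?_) i <;> refine Fin.lastCases ?_ (fun j => ?_) j <;>
    simp [extM, Matrix.mul_apply, Matrix.mulVec, dotProduct, mul_comm]

theorem extM_one {n : ℕ} : extM F (1 : Matrix (Fin n) (Fin n) F) 0 1 = 1 := by
  ext i j
  refine Fin.lastCases ?_ (fun i => ?_) i <;> refine Fin.lastCases ?_ (fun j => ?_) j <;>
    simp [extM, Matrix.one_apply, Fin.castSucc_ne_last, (Fin.castSucc_ne_last _).symm]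

/-- block matrix as a unit -/
noncomputable def extU {n : ℕ} (g : GLn F n) (v : Fin n → F) (u : Fˣ) : GLn F (n + 1) where
  val := extM F g.val v u
  inv := extM F g.inv (-((u⁻¹ : Fˣ) : F) • g.inv.mulVec v) ((u⁻¹ : Fˣ) : F)
  val_inv := by
    rw [extM_mul, ← extM_one]
    congr 1
    · exact g.val_inv
    · rw [Matrix.mulVec_smul, Matrix.mulVec_mulVec, g.val_inv]; simp
    · simp
  inv_val := by
    rw [extM_mul, ← extM_one]
    congr 1
    · exact g.inv_val
    · rw [smul_smul]; simp
    · simp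

theorem extU_mem {n : ℕ} (g : GLn F n) (v : Fin n → F) (u : Fˣ) : extU F g v u ∈ ExtSet F g := by
  rw [mem_ExtSet]
  constructor <;> intros <;> simp [extU, extM]

theorem card_ExtSet {n : ℕ} (g : GLn F n) :
    (ExtSet F g).card = (Fintype.card F - 1) * Fintype.card F ^ n := by
  have : (Finset.univ : Finset (Fˣ × (Fin n → F))).card = (ExtSet F g).card := by
    refine Finset.card_bij (fun p _ => extU F g p.2 p.1) (fun p _ => extU_mem F g _ _) ?_ ?_
    · rintro ⟨u, v⟩ _ ⟨u', v'⟩ _ h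
      have h1 : extM F g.val v u = extM F g.val v' u' := congrArg Units.val h
      refine Prod.ext (Units.ext ?_) (funext fun i => ?_)
      · simpa [extM] using congrFun (congrFun h1 (Fin.last n)) (Fin.last n)
      · simpa [extM] using congrFun (congrFun h1 i.castSucc) (Fin.last n)
    · intro h hh
      rw [mem_ExtSet] at hh
      have h1 : h.val (Fin.last n) (Fin.last n) ≠ 0 := by
        intro h0
        have := congrFun (congrFun h.val_inv (Fin.last n)) (Fin.last n)
        rw [Matrix.mul_apply, Fin.sum_univ_castSucc] at this
        simp [hh.2, h0] at this
      refine ⟨(Units.mk0 _ h1, fun i => h.val i.castSucc (Fin.last n)), Finset.mem_univ _, ?_⟩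
      refine Units.ext ?_
      ext i j
      refine Fin.lastCases ?_ (fun i => ?_) i <;> refine Fin.lastCases ?_ (fun j => ?_) j <;>
        simp [extU, extM, hh.1, hh.2]
  rw [← this, Finset.card_univ, Fintype.card_prod, Fintype.card_units]
  simp

theorem card_ExtSet_cast {n : ℕ} (g : GLn F n) :
    ((ExtSet F g).card : ℂ) = ((Fintype.card F : ℂ) - 1) * (Fintype.card F : ℂ) ^ n := by
  rw [card_ExtSet]
  push_cast [Nat.cast_sub (Fintype.card_pos : 0 < Fintype.card F)]
  simp

theorem const_ne_zero (n : ℕ) : ((Fintype.card F : ℂ) - 1) * (Fintype.card F : ℂ) ^ n ≠ 0 := by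
  rw [← card_ExtSet_cast F (1 : GLn F n)]
  exact Nat.cast_ne_zero.2 (Finset.card_ne_zero_of_mem (extU_mem F 1 0 1))

theorem ExtSet_mul {n : ℕ} {g g' : GLn F n} {h h' : GLn F (n + 1)} (hh : h ∈ ExtSet F g)
    (hh' : h' ∈ ExtSet F g') : h * h' ∈ ExtSet F (g * g') := by
  rw [mem_ExtSet] at *
  constructor <;> intros <;>
    simp [Matrix.mul_apply, Fin.sum_univ_castSucc, hh.1, hh.2, hh'.1, hh'.2]

theorem ExtSet_image {n : ℕ} {g g' : GLn F n} {h : GLn F (n + 1)} (hh : h ∈ ExtSet F g) :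
    ∑ k ∈ ExtSet F g', MonoidAlgebra.single (h * k) (1 : ℂ)
      = ∑ k ∈ ExtSet F (g * g'), MonoidAlgebra.single k (1 : ℂ) := by
  classical
  have : (ExtSet F g').map (mulLeftEmbedding h) = ExtSet F (g * g') := by
    apply Finset.eq_of_subset_of_card_le
    · intro x hx
      obtain ⟨k, hk, rfl⟩ := Finset.mem_map.1 hx
      exact ExtSet_mul F hh hk
    · rw [Finset.card_map, card_ExtSet, card_ExtSet]
  rw [← this, Finset.sum_map]
  rfl

theorem paraEmb_single (n : ℕ) (g : GLn F n) (c : ℂ) :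
    paraEmb F n (MonoidAlgebra.single g c) =
      c • ((((Fintype.card F : ℂ) - 1) * (Fintype.card F : ℂ) ^ n)⁻¹ •
        ∑ h ∈ ExtSet F g, MonoidAlgebra.single h (1 : ℂ)) := by
  simp [paraEmb]

theorem paraEmb_coeff (n : ℕ) (g : GLn F n) (a : GA F n) :
    (paraEmb F n a).coeff (extU F g 0 1) =
      (((Fintype.card F : ℂ) - 1) * (Fintype.card F : ℂ) ^ n)⁻¹ * a.coeff g := by
  classical
  induction a using MonoidAlgebra.induction_linear with
  | zero => simp
  | add x y hx hy => simp [map_add, hx, hy, mul_add]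
  | single k c =>
    rw [paraEmb_single]
    have : (extU F g 0 1 ∈ ExtSet F k) ↔ k = g := by
      constructor
      · intro h
        have h' := extU_mem F g 0 1
        rw [mem_ExtSet] at h h'
        ext i j
        rw [← h.1, h'.1]
      · rintro rfl
        exact extU_mem F k 0 1
    simp [MonoidAlgebra.coeff_sum, Finsupp.finset_sum_apply, Finsupp.single_apply, this]
    split_ifs <;> ring

/-- **The parabolic embedding is an injective (non-unital) algebra homomorphism**: the linear
map `i_n` is injective and multiplicative. -/
theorem paraEmb_injective_and_multiplicative (n : ℕ) :
    Function.Injective (paraEmb F n) ∧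
    ∀ a b : GA F n, paraEmb F n (a * b) = paraEmb F n a * paraEmb F n b := by
  constructor
  · intro a b hab
    ext g
    have h := paraEmb_coeff F n g a
    rw [hab, paraEmb_coeff] at h
    exact (mul_left_cancel₀ (inv_ne_zero (const_ne_zero F n)) h).symm
  · intro a b
    induction a using MonoidAlgebra.induction_linear with
    | zero => simp
    | add x y hx hy => rw [add_mul, map_add, map_add, add_mul, hx, hy]
    | single g c =>
      induction b using MonoidAlgebra.induction_linear with
      | zero => simp
      | add x y hx hy => rw [mul_add, map_add, map_add, mul_add, hx, hy]
      | single g' d =>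
        rw [MonoidAlgebra.single_mul_single, paraEmb_single, paraEmb_single, paraEmb_single]
        simp only [smul_mul_assoc, mul_smul_comm, smul_smul]
        rw [Finset.sum_mul_sum]
        simp only [MonoidAlgebra.single_mul_single, mul_one]
        rw [Finset.sum_congr rfl (fun h hh => ExtSet_image F (g' := g') hh), Finset.sum_const,
          ← Nat.cast_smul_eq_nsmul ℂ, card_ExtSet_cast, smul_smul]
        congr 1
        have := const_ne_zero F n
        generalize ((Fintype.card F : ℂ) - 1) * (Fintype.card F : ℂ) ^ n = z at *
        field_simp
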